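/- Let F_q be a finite field with q elements of characteristic different from 2 and 3, with q ≡ 1 (mod 3). Let E be a nonsingular Weierstrass curve over F_q and let a = q + 1 − N, where N is the number of F_q-rational points of E (including the point at infinity). If 3 divides a, then the j-invariant of E is a cube in F_q, i.e., there exists c ∈ F_q with c³ = j(E). -/

import Mathlib

/-!
Since `j = c₄ ^ 3 / Δ`, it suffices to show that the discriminant `Δ` is a cube. The tool is the
`3`-division polynomial `ψ₃ = 3x⁴ + b₂x³ + 3b₄x² + 3b₆x + b₈`, whose resolvent cubic is essentially
`w ^ 3 = Δ`.

* If `ψ₃ / 3 = (x² + sx + t)(x² + s'x + u)` over a field `K`, then `Δ = (b₄ - 3(t + u)) ^ 3` in `K`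
  (`exists_cube_of_factor`). If `ψ₃` has no root in `F`, it is either a product of two quadratics
  over `F`, or irreducible, in which case it splits over an extension of degree four. In the second
  case taking norms shows that `Δ ^ 4`, hence `Δ`, is a cube in `F`
  (`exists_cube_of_forall_ne_zero`).
* If `ψ₃` has a root `x₀` in `F`, then `x₀` is the abscissa of a point of order three, either on `E`
  or on its quadratic twist, so `3` divides the number of points `N` or `N'` of one of these two
  curves (`three_dvd_card`). Counting with the quadratic character gives `N + N' = 2q + 2`
  (`card_point`). With `q ≡ 1` and `3 ∣ a = q + 1 - N`, both `N` and `N'` are `2` modulo `3`, so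
  this case does not occur.
-/

open Polynomial

/-! ### The resolvent cubic of the division polynomial -/

/-- The monic quartic proportional to the `3`-division polynomial of a Weierstrass curve with
invariants `b₂, b₄, b₆, b₈`, over a field in which `3 ≠ 0`. -/
noncomputable def quartic {K : Type*} [Field K] (b2 b4 b6 b8 : K) : K[X] :=
  X ^ 4 + C (b2 / 3) * X ^ 3 + C b4 * X ^ 2 + C b6 * X + C (b8 / 3)

lemma quartic_natDegree {K : Type*} [Field K] (b2 b4 b6 b8 : K) :
    (quartic b2 b4 b6 b8).natDegree = 4 := by
  unfold quartic; compute_degree!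

lemma quartic_monic {K : Type*} [Field K] (b2 b4 b6 b8 : K) :
    (quartic b2 b4 b6 b8).Monic := by
  unfold quartic; monicity!

lemma monic_quadratic {K : Type*} [Field K] {p : K[X]} (hp : p.Monic) (h : p.natDegree = 2) :
    ∃ s t, p = X ^ 2 + C s * X + C t := by
  refine ⟨p.coeff 1, p.coeff 0, ?_⟩
  conv_lhs => rw [hp.as_sum, h]
  simp [Finset.sum_range_succ]
  ring

lemma quartic_coeff_inj {K : Type*} [Field K] {a b c d a' b' c' d' : K}
    (h : (X ^ 4 + C a * X ^ 3 + C b * X ^ 2 + C c * X + C d : K[X]) =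
      X ^ 4 + C a' * X ^ 3 + C b' * X ^ 2 + C c' * X + C d') :
    a = a' ∧ b = b' ∧ c = c' ∧ d = d' := by
  have e0 := congrArg (fun f => coeff f 0) h
  have e1 := congrArg (fun f => coeff f 1) h
  have e2 := congrArg (fun f => coeff f 2) h
  have e3 := congrArg (fun f => coeff f 3) h
  simp [coeff_X, coeff_X_pow, coeff_C] at e0 e1 e2 e3
  exact ⟨e3, e2, e1, e0⟩

/-- The resolvent cubic: a factorization of the quartic into two monic quadratics with constant
terms `t` and `u` produces the cube root `b₄ - 3(t + u)` of the discriminant. -/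
lemma exists_cube_of_factor {K : Type*} [Field K] (h3 : (3 : K) ≠ 0) {b2 b4 b6 b8 : K}
    (hb : 4 * b8 = b2 * b6 - b4 ^ 2) {p q : K[X]} (hp : p.Monic) (hq : q.Monic)
    (hp2 : p.natDegree = 2) (hq2 : q.natDegree = 2) (h : quartic b2 b4 b6 b8 = p * q) :
    ∃ w : K, w ^ 3 = -b2 ^ 2 * b8 - 8 * b4 ^ 3 - 27 * b6 ^ 2 + 9 * b2 * b4 * b6 := by
  obtain ⟨s, t, rfl⟩ := monic_quadratic hp hp2
  obtain ⟨s', u, rfl⟩ := monic_quadratic hq hq2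
  have key : (X ^ 2 + C s * X + C t) * (X ^ 2 + C s' * X + C u) =
      X ^ 4 + C (s + s') * X ^ 3 + C (t + u + s * s') * X ^ 2 + C (s * u + s' * t) * X
        + C (t * u) := by
    simp only [C_add, C_mul]; ring
  rw [key, quartic] at h
  obtain ⟨e3, e2, e1, e0⟩ := quartic_coeff_inj h
  rw [div_eq_iff h3] at e0 e3
  refine ⟨b4 - 3 * (t + u), ?_⟩
  subst e0 e1 e2 e3
  linear_combination (9 * s * s') * hb

/-- If the quartic splits over an extension of degree four, then taking norms shows that the fourth
power of the discriminant, and hence the discriminant, is a cube in the base field. -/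
lemma exists_cube_of_splits {F L : Type*} [Field F] [Field L] [Algebra F L]
    (hrank : Module.finrank F L = 4) (h3 : (3 : F) ≠ 0) {b2 b4 b6 b8 : F}
    (hb : 4 * b8 = b2 * b6 - b4 ^ 2)
    (hsplit : ((quartic b2 b4 b6 b8).map (algebraMap F L)).Splits) :
    ∃ w : F, w ^ 3 = -b2 ^ 2 * b8 - 8 * b4 ^ 3 - 27 * b6 ^ 2 + 9 * b2 * b4 * b6 := by
  set f := quartic b2 b4 b6 b8 with hf
  have hmap : f.map (algebraMap F L) = quartic (algebraMap F L b2) (algebraMap F L b4)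
      (algebraMap F L b6) (algebraMap F L b8) := by
    simp [f, quartic, Polynomial.map_add, map_ofNat (algebraMap F L)]
  have h3L : (3 : L) ≠ 0 := by
    intro h
    apply h3
    apply (algebraMap F L).injective
    simpa [map_ofNat (algebraMap F L)] using h
  have hprod := hsplit.eq_prod_roots_of_monic ((quartic_monic ..).map _)
  have hcard := hsplit.natDegree_eq_card_roots
  rw [(quartic_monic ..).natDegree_map, quartic_natDegree] at hcard
  obtain ⟨l, hl⟩ := Quot.exists_rep (f.map (algebraMap F L)).roots
  rw [← hl] at hprod hcard
  obtain ⟨r1, r2, r3, r4, rfl⟩ : ∃ r1 r2 r3 r4, l = [r1, r2, r3, r4] := by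
    match l, hcard with
    | [r1, r2, r3, r4], _ => exact ⟨r1, r2, r3, r4, rfl⟩
  have hfac : f.map (algebraMap F L) =
      ((X - C r1) * (X - C r2)) * ((X - C r3) * (X - C r4)) := by
    rw [hprod]
    simp [mul_assoc]
  rw [hmap] at hfac
  obtain ⟨w, hw⟩ := exists_cube_of_factor h3L
    (by simpa [map_ofNat (algebraMap F L)] using congrArg (algebraMap F L) hb)
    ((monic_X_sub_C r1).mul (monic_X_sub_C r2)) ((monic_X_sub_C r3).mul (monic_X_sub_C r4))
    (by rw [(monic_X_sub_C r1).natDegree_mul (monic_X_sub_C r2)]; simp)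
    (by rw [(monic_X_sub_C r3).natDegree_mul (monic_X_sub_C r4)]; simp) hfac
  set d := -b2 ^ 2 * b8 - 8 * b4 ^ 3 - 27 * b6 ^ 2 + 9 * b2 * b4 * b6 with hd
  have hw' : w ^ 3 = algebraMap F L d := by
    rw [hw, hd]; simp [map_ofNat (algebraMap F L)]
  have hn : (Algebra.norm F w) ^ 3 = d ^ 4 := by
    rw [← map_pow, hw', Algebra.norm_algebraMap, hrank]
  by_cases hd0 : d = 0
  · exact ⟨0, by simp [hd0]⟩
  · refine ⟨Algebra.norm F w / d, ?_⟩
    rw [div_pow, hn]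
    field_simp

/-- A quartic without roots over a finite field factors into two quadratics over an extension of
degree `1` or `4`; as these degrees are prime to `3`, the discriminant is already a cube in the
base field. -/
lemma exists_cube_of_forall_ne_zero {F : Type*} [Field F] [Finite F] (h3 : (3 : F) ≠ 0)
    {b2 b4 b6 b8 : F} (hb : 4 * b8 = b2 * b6 - b4 ^ 2)
    (hroot : ∀ x : F, 3 * x ^ 4 + b2 * x ^ 3 + 3 * b4 * x ^ 2 + 3 * b6 * x + b8 ≠ 0) :
    ∃ w : F, w ^ 3 = -b2 ^ 2 * b8 - 8 * b4 ^ 3 - 27 * b6 ^ 2 + 9 * b2 * b4 * b6 := by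
  set f := quartic b2 b4 b6 b8 with hf
  have hdeg : f.natDegree = 4 := quartic_natDegree ..
  have hmon : f.Monic := quartic_monic ..
  have hnr : ∀ x, f.eval x ≠ 0 := by
    intro x hx
    apply hroot x
    simp [hf, quartic] at hx
    field_simp at hx
    linear_combination hx
  by_cases hirr : Irreducible f
  · have : Fact (Irreducible f) := ⟨hirr⟩
    let L := AdjoinRoot f
    let pb := AdjoinRoot.powerBasis hirr.ne_zero
    have : Module.Finite F L := pb.finite
    have : Finite L := Module.finite_of_finite F
    have hrank : Module.finrank F L = 4 := by
      rw [pb.finrank, AdjoinRoot.powerBasis_dim, hdeg]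
    have hmin : f = minpoly F (AdjoinRoot.root f) :=
      minpoly.eq_of_irreducible_of_monic hirr (by simp) hmon
    have hsplit : (f.map (algebraMap F L)).Splits := by
      have hs : ((minpoly F (AdjoinRoot.root f)).map (algebraMap F L)).Splits :=
        Normal.splits inferInstance _
      rwa [← hmin] at hs
    exact exists_cube_of_splits hrank h3 hb hsplit
  · rw [hmon.irreducible_iff_natDegree'] at hirr
    have h1 : f ≠ 1 := by
      intro h; rw [h] at hdeg; simp at hdeg
    push Not at hirr
    obtain ⟨p, q, hp, hq, hpq, hmem⟩ := hirr h1
    have hsum : p.natDegree + q.natDegree = 4 := by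
      rw [← hp.natDegree_mul hq, hpq, hdeg]
    rw [hdeg, Finset.mem_Ioc] at hmem
    have hq1 : q.natDegree ≠ 1 := by
      intro h
      obtain ⟨x, hx⟩ := exists_root_of_degree_eq_one
        ((degree_eq_iff_natDegree_eq hq.ne_zero).mpr h)
      apply hnr x
      rw [← hpq, eval_mul, show q.eval x = 0 from hx, mul_zero]
    exact exists_cube_of_factor h3 hb hp hq (by omega) (by omega) hpq.symm

/-! ### Roots of the division polynomial and points of order three -/

open WeierstrassCurve in
/-- A rational point whose abscissa is a root of the `3`-division polynomial has order three. -/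
lemma three_dvd_card {F : Type*} [Field F] (E : WeierstrassCurve F) [E.IsElliptic]
    {x y : F} (hx : 3 * x ^ 4 + E.b₂ * x ^ 3 + 3 * E.b₄ * x ^ 2 + 3 * E.b₆ * x + E.b₈ = 0)
    (hxy : E.toAffine.Equation x y) : 3 ∣ Nat.card E.toAffine.Point := by
  classical
  have hns : E.toAffine.Nonsingular x y := Affine.equation_iff_nonsingular.mp hxy
  have heq := (Affine.equation_iff _ _).mp hxy
  -- `n / d` is the slope of the tangent line at `(x, y)`
  set n := 3 * x ^ 2 + 2 * E.a₂ * x + E.a₄ - E.a₁ * y with hn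
  set d := 2 * y + E.a₁ * x + E.a₃ with hd
  -- up to the equation of the curve, `ψ₃ (x) = 0` says that this tangent meets the curve only at `x`
  have key : n ^ 2 + E.a₁ * n * d - (E.a₂ + 3 * x) * d ^ 2 = 0 := by
    simp only [b₂, b₄, b₆, b₈] at hx
    rw [hn, hd]
    linear_combination -hx - (12 * x + E.a₁ ^ 2 + 4 * E.a₂) * heq
  have hd0 : d ≠ 0 := by
    intro h0
    have hn0 : n = 0 := by
      rw [h0] at key
      simpa using key
    rcases ((Affine.nonsingular_iff' _ _).mp hns).2 with h | h
    · exact h (by linear_combination -hn0)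
    · exact h h0
  have hneg : y ≠ E.toAffine.negY x y := by
    intro h
    apply hd0
    rw [Affine.negY] at h
    linear_combination h
  set P : E.toAffine.Point := .some x y hns with hP
  have hX : E.toAffine.addX x x (E.toAffine.slope x x y y) = x := by
    rw [Affine.slope_of_Y_ne rfl hneg]
    have hden : y - E.toAffine.negY x y = d := by
      rw [Affine.negY]; ring
    rw [hden, Affine.addX, ← hn]
    field_simp
    linear_combination key
  have hPP : P + P = P ∨ P + P = -P := by
    rw [hP, Affine.Point.add_self_of_Y_ne hneg]
    exact Affine.Point.X_eq_iff.mp hX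
  have hP0 : P ≠ 0 := Affine.Point.some_ne_zero _
  have h3P : 3 • P = 0 := by
    rcases hPP with h | h
    · exact absurd (left_eq_add.mp h.symm) hP0
    · rw [show 3 • P = (P + P) + P by abel, h, neg_add_cancel]
  have : Fact (Nat.Prime 3) := ⟨Nat.prime_three⟩
  rw [← addOrderOf_eq_prime h3P hP0]
  exact addOrderOf_dvd_natCard P

/-! ### Counting points with the quadratic character -/

lemma ringChar_ne_two {F : Type*} [Field F] (h2 : (2 : F) ≠ 0) : ringChar F ≠ 2 := by
  intro h
  have := ringChar.Nat.cast_ringChar (R := F)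
  rw [h] at this
  exact h2 (by exact_mod_cast this)

/-- Completing the square turns the equation of `E` into `z ^ 2 = 4x³ + b₂x² + 2b₄x + b₆`, whose
number of solutions above each `x` is one plus a value of the quadratic character. -/
lemma card_point {F : Type*} [Field F] [Fintype F] [DecidableEq F] (h2 : (2 : F) ≠ 0)
    (E : WeierstrassCurve F) [E.IsElliptic] :
    (Nat.card E.toAffine.Point : ℤ) = Fintype.card F + 1 +
      ∑ x : F, quadraticChar F (4 * x ^ 3 + E.b₂ * x ^ 2 + 2 * E.b₄ * x + E.b₆) := by
  have hchar : ringChar F ≠ 2 := ringChar_ne_two h2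
  have e : {xy : F × F // E.toAffine.Equation xy.1 xy.2} ≃
      (Σ x : F, {z : F | z ^ 2 = 4 * x ^ 3 + E.b₂ * x ^ 2 + 2 * E.b₄ * x + E.b₆}) :=
    -- completing the square: `z = 2y + a₁x + a₃`
    { toFun := fun p => ⟨p.1.1, 2 * p.1.2 + E.a₁ * p.1.1 + E.a₃, by
        have := (WeierstrassCurve.Affine.equation_iff _ _).mp p.2
        simp only [WeierstrassCurve.b₂, WeierstrassCurve.b₄, WeierstrassCurve.b₆, Set.mem_ofPred_eq]
        linear_combination 4 * this⟩
      invFun := fun p => ⟨(p.1, (p.2.1 - E.a₁ * p.1 - E.a₃) / 2), by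
        have := p.2.2
        simp only [WeierstrassCurve.b₂, WeierstrassCurve.b₄, WeierstrassCurve.b₆,
          Set.mem_ofPred_eq] at this
        rw [WeierstrassCurve.Affine.equation_iff]
        field_simp
        linear_combination this⟩
      left_inv := fun p => by
        ext
        · rfl
        · simp; field_simp; ring
      right_inv := fun ⟨x, z, hz⟩ => by
        simp only [Sigma.mk.injEq, heq_eq_eq, true_and, Subtype.mk.injEq]
        field_simp; ring }
  have h1 : Nat.card E.toAffine.Point =
      Nat.card {xy : F × F // E.toAffine.Equation xy.1 xy.2} + 1 := by
    rw [Nat.card_congr E.toAffine.pointEquiv]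
    exact Finite.card_option
  rw [h1, Nat.card_congr e, Nat.card_sigma]
  push_cast
  have h4 : ∀ x : F, (Nat.card {z : F | z ^ 2 = 4 * x ^ 3 + E.b₂ * x ^ 2 + 2 * E.b₄ * x + E.b₆} : ℤ)
      = quadraticChar F (4 * x ^ 3 + E.b₂ * x ^ 2 + 2 * E.b₄ * x + E.b₆) + 1 := by
    intro x
    rw [← quadraticChar_card_sqrts hchar, Set.toFinset_card, Nat.card_eq_fintype_card]
  rw [Finset.sum_congr rfl fun x _ => h4 x, Finset.sum_add_distrib]
  simp
  ring

/-! ### The quadratic twist -/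

/-- The quadratic twist of a Weierstrass curve by `D`, in characteristic different from `2`: the
curve `y² = x³ + D(b₂/4)x² + D²(b₄/2)x + D³(b₆/4)`. -/
def quadTwist {F : Type*} [Field F] (E : WeierstrassCurve F) (D : F) : WeierstrassCurve F where
  a₁ := 0
  a₂ := D * E.b₂ / 4
  a₃ := 0
  a₄ := D ^ 2 * E.b₄ / 2
  a₆ := D ^ 3 * E.b₆ / 4

lemma quadTwist_b {F : Type*} [Field F] (h2 : (2 : F) ≠ 0) (E : WeierstrassCurve F) (D : F) :
    (quadTwist E D).b₂ = D * E.b₂ ∧ (quadTwist E D).b₄ = D ^ 2 * E.b₄ ∧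
      (quadTwist E D).b₆ = D ^ 3 * E.b₆ ∧ (quadTwist E D).b₈ = D ^ 4 * E.b₈ := by
  have h4 : (4 : F) ≠ 0 := by
    rw [show (4 : F) = 2 * 2 by norm_num]; exact mul_ne_zero h2 h2
  have e2 : (quadTwist E D).b₂ = D * E.b₂ := by
    simp [WeierstrassCurve.b₂, quadTwist]; field_simp
  have e4 : (quadTwist E D).b₄ = D ^ 2 * E.b₄ := by
    simp [WeierstrassCurve.b₄, quadTwist]; field_simp
  have e6 : (quadTwist E D).b₆ = D ^ 3 * E.b₆ := by
    simp [WeierstrassCurve.b₆, quadTwist]; field_simp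
  refine ⟨e2, e4, e6, ?_⟩
  apply mul_left_cancel₀ h4
  rw [(quadTwist E D).b_relation, e2, e4, e6]
  linear_combination -D ^ 4 * E.b_relation

lemma quadTwist_isElliptic {F : Type*} [Field F] (h2 : (2 : F) ≠ 0) (E : WeierstrassCurve F)
    [E.IsElliptic] {D : F} (hD : D ≠ 0) : (quadTwist E D).IsElliptic := by
  obtain ⟨e2, e4, e6, e8⟩ := quadTwist_b h2 E D
  have hΔ : (quadTwist E D).Δ = D ^ 6 * E.Δ := by
    simp only [WeierstrassCurve.Δ, e2, e4, e6, e8]; ring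
  exact ⟨hΔ ▸ (hD.isUnit.pow 6).mul E.isUnit_Δ⟩

/-- For a nonsquare `D`, a curve and its twist by `D` have `2q + 2` points in total. -/
lemma card_add_card_quadTwist {F : Type*} [Field F] [Fintype F] [DecidableEq F]
    (h2 : (2 : F) ≠ 0) (E : WeierstrassCurve F) [E.IsElliptic] {D : F} (hD0 : D ≠ 0)
    (hD : quadraticChar F D = -1) :
    (Nat.card E.toAffine.Point : ℤ) + Nat.card (quadTwist E D).toAffine.Point =
      2 * Fintype.card F + 2 := by
  have := quadTwist_isElliptic h2 E hD0
  obtain ⟨e2, e4, e6, -⟩ := quadTwist_b h2 E D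
  have hsum : ∑ x : F, quadraticChar F (4 * x ^ 3 + (quadTwist E D).b₂ * x ^ 2 +
        2 * (quadTwist E D).b₄ * x + (quadTwist E D).b₆) =
      -∑ x : F, quadraticChar F (4 * x ^ 3 + E.b₂ * x ^ 2 + 2 * E.b₄ * x + E.b₆) := by
    rw [← Finset.sum_neg_distrib, ← Equiv.sum_comp (Equiv.mulLeft₀ D hD0)]
    refine Finset.sum_congr rfl fun x _ => ?_
    have : 4 * (D * x) ^ 3 + (quadTwist E D).b₂ * (D * x) ^ 2 +
        2 * (quadTwist E D).b₄ * (D * x) + (quadTwist E D).b₆ =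
        D ^ 3 * (4 * x ^ 3 + E.b₂ * x ^ 2 + 2 * E.b₄ * x + E.b₆) := by
      rw [e2, e4, e6]; ring
    rw [Equiv.mulLeft₀_apply, this, map_mul, map_pow, hD]
    ring
  rw [card_point h2 E, card_point h2 (quadTwist E D), hsum]
  ring

theorem stmt_10 (F : Type*) [Field F] [Fintype F]
    (h2 : (2 : F) ≠ 0) (h3 : (3 : F) ≠ 0)
    (hmod : Fintype.card F % 3 = 1)
    (E : WeierstrassCurve F) (i : E.IsElliptic)
    (N : ℕ) (hN : N = Nat.card E.toAffine.Point)
    (a : ℤ) (ha : a = (Fintype.card F : ℤ) + 1 - N)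
    (hdvd : (3 : ℤ) ∣ a) :
    ∃ c : F, c ^ 3 = @WeierstrassCurve.j F _ E i := by
  classical
  have hchar : ringChar F ≠ 2 := ringChar_ne_two h2
  suffices h : ∃ w : F, w ^ 3 = E.Δ by
    obtain ⟨w, hw⟩ := h
    refine ⟨w⁻¹ * E.c₄, ?_⟩
    rw [WeierstrassCurve.j, mul_pow, inv_pow, hw, Units.val_inv_eq_inv_val, WeierstrassCurve.coe_Δ']
  refine exists_cube_of_forall_ne_zero h3 E.b_relation fun x hx => ?_
  set g := 4 * x ^ 3 + E.b₂ * x ^ 2 + 2 * E.b₄ * x + E.b₆ with hg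
  by_cases hsq : IsSquare g
  · obtain ⟨z, hz⟩ := hsq
    have hE : E.toAffine.Equation x ((z - E.a₁ * x - E.a₃) / 2) := by
      rw [WeierstrassCurve.Affine.equation_iff]
      simp only [WeierstrassCurve.b₂, WeierstrassCurve.b₄, WeierstrassCurve.b₆] at hg
      field_simp
      linear_combination hg - hz
    have := three_dvd_card E hx hE
    omega
  · have hg1 : quadraticChar F g = -1 := quadraticChar_neg_one_iff_not_isSquare.mpr hsq
    have hg0 : g ≠ 0 := fun h => hsq (h ▸ IsSquare.zero)
    have := quadTwist_isElliptic h2 E hg0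
    obtain ⟨e2, e4, e6, e8⟩ := quadTwist_b h2 E g
    have h4 : (4 : F) ≠ 0 := by
      rw [show (4 : F) = 2 * 2 by norm_num]; exact mul_ne_zero h2 h2
    -- since `z ^ 2 = g` becomes solvable after twisting by `g` itself, the abscissa `g * x` lifts
    have hE : (quadTwist E g).toAffine.Equation (g * x) (g ^ 2 / 2) := by
      rw [WeierstrassCurve.Affine.equation_iff]
      simp only [quadTwist]
      apply mul_left_cancel₀ h4
      field_simp
      linear_combination 4 * hg
    have h := three_dvd_card (quadTwist E g) (x := g * x)
      (by rw [e2, e4, e6, e8]; linear_combination g ^ 4 * hx) hE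
    have hsum := card_add_card_quadTwist h2 E hg0 hg1
    omega
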